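/- For every β>0, every critical point x = (x_1,x_2) of F_β in Ξ° (that is, every point where the gradient of F_β vanishes) has at least two equal coordinates among x_0, x_1, x_2: either x_0 = x_1, or x_0 = x_2, or x_1 = x_2. -/

import Mathlib

/-!
Since `v₁` and `v₂` are unit vectors with `v₁ · v₂ = -1/2`, one has `|ψ|² = a² + b² - a b` with
`a = x₁ - x₀` and `b = x₂ - x₀` (`potF_eq`). The partial derivatives of `F_β` therefore vanish
exactly when `log xᵢ - log x₀ = (3β/2) (xᵢ - x₀)` for `i = 1, 2`, i.e. when the strictly concave
function `t ↦ log t - (3β/2) t` takes the same value at `x₀`, `x₁`, `x₂`. A strictly concave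
function takes no value three times (`log_line_three_points`), so two coordinates coincide.
-/

/-- The spin value `v_k = (cos(2πk/3), sin(2πk/3))`. -/
noncomputable def potV (k : ℕ) : ℝ × ℝ :=
  (Real.cos (2 * Real.pi * k / 3), Real.sin (2 * Real.pi * k / 3))

/-- `ψ(x) = (2x₁+x₂−1)v₁ + (x₁+2x₂−1)v₂`. -/
noncomputable def potPsi (x : ℝ × ℝ) : ℝ × ℝ :=
  ((2 * x.1 + x.2 - 1) * (potV 1).1 + (x.1 + 2 * x.2 - 1) * (potV 2).1,
   (2 * x.1 + x.2 - 1) * (potV 1).2 + (x.1 + 2 * x.2 - 1) * (potV 2).2)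

/-- The entropy `S(x) = Σᵢ xᵢ log(3xᵢ)` with `x₀ = 1 − x₁ − x₂`
(the convention `t log t = 0` at `t = 0` holds since `Real.log 0 = 0`). -/
noncomputable def potS (x : ℝ × ℝ) : ℝ :=
  (1 - x.1 - x.2) * Real.log (3 * (1 - x.1 - x.2))
    + x.1 * Real.log (3 * x.1) + x.2 * Real.log (3 * x.2)

/-- The mean-field Potts potential `F_β(x) = −(1/2)|ψ(x)|² + (1/β)S(x)`. -/
noncomputable def potF (β : ℝ) (x : ℝ × ℝ) : ℝ :=
  - (1 / 2) * ((potPsi x).1 ^ 2 + (potPsi x).2 ^ 2) + (1 / β) * potS x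

/-- The open two-dimensional simplex `Ξ°`. -/
def simplexInt : Set (ℝ × ℝ) := {x | 0 < x.1 ∧ 0 < x.2 ∧ x.1 + x.2 < 1}

/-- The potential with the spin vectors eliminated. -/
lemma potF_eq (β : ℝ) : potF β = fun x : ℝ × ℝ =>
    - (1 / 2) * ((2 * x.1 + x.2 - 1) ^ 2 + (x.1 + 2 * x.2 - 1) ^ 2
      - (2 * x.1 + x.2 - 1) * (x.1 + 2 * x.2 - 1))
    + (1 / β) * ((1 - x.1 - x.2) * Real.log (3 * (1 - x.1 - x.2))
    + x.1 * Real.log (3 * x.1) + x.2 * Real.log (3 * x.2)) := by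
  have c1 : Real.cos (2 * Real.pi * (1 : ℕ) / 3) = -(1 / 2) := by
    rw [show 2 * Real.pi * (1 : ℕ) / 3 = Real.pi - Real.pi / 3 by push_cast; ring,
      Real.cos_pi_sub, Real.cos_pi_div_three]
  have s1 : Real.sin (2 * Real.pi * (1 : ℕ) / 3) = √3 / 2 := by
    rw [show 2 * Real.pi * (1 : ℕ) / 3 = Real.pi - Real.pi / 3 by push_cast; ring,
      Real.sin_pi_sub, Real.sin_pi_div_three]
  have c2 : Real.cos (2 * Real.pi * (2 : ℕ) / 3) = -(1 / 2) := by
    rw [show 2 * Real.pi * (2 : ℕ) / 3 = Real.pi / 3 + Real.pi by push_cast; ring,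
      Real.cos_add_pi, Real.cos_pi_div_three]
  have s2 : Real.sin (2 * Real.pi * (2 : ℕ) / 3) = -(√3 / 2) := by
    rw [show 2 * Real.pi * (2 : ℕ) / 3 = Real.pi / 3 + Real.pi by push_cast; ring,
      Real.sin_add_pi, Real.sin_pi_div_three]
  funext x
  simp only [potF, potPsi, potS, potV, c1, s1, c2, s2]
  have h3 : √3 ^ 2 = (3 : ℝ) := Real.sq_sqrt (by norm_num)
  linear_combination (-(1 / 8) * (x.1 - x.2) ^ 2) * h3

lemma differentiableAt_potF (β : ℝ) {x : ℝ × ℝ} (hx : x ∈ simplexInt) :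
    DifferentiableAt ℝ (potF β) x := by
  obtain ⟨h1, h2, h3⟩ := hx
  have e0 : 3 * (1 - x.1 - x.2) ≠ 0 := by
    have : 0 < 1 - x.1 - x.2 := by linarith
    positivity
  have e1 : 3 * x.1 ≠ 0 := by positivity
  have e2 : 3 * x.2 ≠ 0 := by positivity
  rw [potF_eq]
  fun_prop (disch := assumption)

lemma hasDerivAt_mul_log_three {f : ℝ → ℝ} {f' t : ℝ} (hf : HasDerivAt f f' t) (h : 0 < f t) :
    HasDerivAt (fun s => f s * Real.log (3 * f s)) (f' * (Real.log 3 + Real.log (f t) + 1)) t := by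
  have h3 : 3 * f t ≠ 0 := by positivity
  refine (hf.mul ((hf.const_mul 3).log h3)).congr_deriv ?_
  rw [Real.log_mul (by norm_num) h.ne']
  field_simp

/-- Vanishing of the partial derivative of the potential in the first coordinate, with the
logarithms isolated. -/
lemma critical_fst {β : ℝ} (hβ : 0 < β) {x : ℝ × ℝ} (hx : x ∈ simplexInt)
    (hcrit : fderiv ℝ (potF β) x = 0) :
    Real.log x.1 - Real.log (1 - x.1 - x.2) = 3 / 2 * β * (x.1 - (1 - x.1 - x.2)) := by
  have hF := (differentiableAt_potF β hx).hasFDerivAt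
  obtain ⟨h1, h2, h3⟩ := hx
  have hid := hasDerivAt_id' x.1
  have hc : HasDerivAt (fun t : ℝ => (t, x.2)) ((1 : ℝ), (0 : ℝ)) x.1 :=
    hid.prodMk (hasDerivAt_const x.1 x.2)
  rw [hcrit] at hF
  have hA := HasFDerivAt.comp_hasDerivAt (f := fun t : ℝ => (t, x.2)) x.1 hF hc
  have ha : HasDerivAt (fun t : ℝ => 2 * t + x.2 - 1) (2 * 1) x.1 :=
    ((hid.const_mul 2).add_const _).sub_const _
  have hb : HasDerivAt (fun t : ℝ => t + 2 * x.2 - 1) 1 x.1 :=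
    (hid.add_const _).sub_const _
  have h0 : HasDerivAt (fun t : ℝ => 1 - t - x.2) (-1) x.1 :=
    (hid.const_sub 1).sub_const _
  have hB := ((((ha.pow 2).add (hb.pow 2)).sub (ha.mul hb)).const_mul (-(1 / 2))).add
    ((((hasDerivAt_mul_log_three h0 (by linarith)).add (hasDerivAt_mul_log_three hid h1)).add_const
      (x.2 * Real.log (3 * x.2))).const_mul (1 / β))
  rw [potF_eq] at hA
  have h := hA.unique hB
  simp only [zero_apply] at h
  field_simp at h
  linear_combination -(1 / 2) * h

/-- Vanishing of the partial derivative of the potential in the second coordinate, with the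
logarithms isolated. -/
lemma critical_snd {β : ℝ} (hβ : 0 < β) {x : ℝ × ℝ} (hx : x ∈ simplexInt)
    (hcrit : fderiv ℝ (potF β) x = 0) :
    Real.log x.2 - Real.log (1 - x.1 - x.2) = 3 / 2 * β * (x.2 - (1 - x.1 - x.2)) := by
  have hF := (differentiableAt_potF β hx).hasFDerivAt
  obtain ⟨h1, h2, h3⟩ := hx
  have hid := hasDerivAt_id' x.2
  have hc : HasDerivAt (fun t : ℝ => (x.1, t)) ((0 : ℝ), (1 : ℝ)) x.2 :=
    (hasDerivAt_const x.2 x.1).prodMk hid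
  rw [hcrit] at hF
  have hA := HasFDerivAt.comp_hasDerivAt (f := fun t : ℝ => (x.1, t)) x.2 hF hc
  have ha : HasDerivAt (fun t : ℝ => 2 * x.1 + t - 1) 1 x.2 :=
    (hid.const_add _).sub_const _
  have hb : HasDerivAt (fun t : ℝ => x.1 + 2 * t - 1) (2 * 1) x.2 :=
    ((hid.const_mul 2).const_add _).sub_const _
  have h0 : HasDerivAt (fun t : ℝ => 1 - x.1 - t) (-1) x.2 := hid.const_sub _
  have hB := ((((ha.pow 2).add (hb.pow 2)).sub (ha.mul hb)).const_mul (-(1 / 2))).add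
    ((((hasDerivAt_mul_log_three h0 (by linarith)).add_const
      (x.1 * Real.log (3 * x.1))).add (hasDerivAt_mul_log_three hid h2)).const_mul (1 / β))
  rw [potF_eq] at hA
  have h := hA.unique hB
  simp only [zero_apply] at h
  field_simp at h
  linear_combination -(1 / 2) * h

/-- No line meets the graph of the logarithm in three points. -/
lemma log_line_three_points {k a b c : ℝ} (ha : 0 < a) (hab : a < b) (hbc : b < c)
    (h1 : Real.log b - Real.log a = k * (b - a))
    (h2 : Real.log c - Real.log b = k * (c - b)) : False := by
  have h := strictConcaveOn_log_Ioi.slope_anti_adjacent (x := a) (y := b) (z := c)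
    ha (ha.trans (hab.trans hbc)) hab hbc
  rw [h1, h2, mul_div_cancel_right₀ _ (sub_pos.2 hab).ne',
    mul_div_cancel_right₀ _ (sub_pos.2 hbc).ne'] at h
  exact lt_irrefl _ h

/-- every critical point of `F_β` in `Ξ°` has at least two equal coordinates
among `x₀, x₁, x₂`. -/
theorem potts_critical_two_equal_coordinates (β : ℝ) (hβ : 0 < β) (x : ℝ × ℝ)
    (hx : x ∈ simplexInt) (hcrit : fderiv ℝ (potF β) x = 0) :
    1 - x.1 - x.2 = x.1 ∨ 1 - x.1 - x.2 = x.2 ∨ x.1 = x.2 := by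
  have e1 := critical_fst hβ hx hcrit
  have e2 := critical_snd hβ hx hcrit
  obtain ⟨h1, h2, h3⟩ := hx
  have h0 : 0 < 1 - x.1 - x.2 := by linarith
  generalize 1 - x.1 - x.2 = x0 at *
  by_contra! hne
  obtain ⟨n1, n2, n3⟩ := hne
  rcases lt_or_gt_of_ne n1 with l1 | l1 <;> rcases lt_or_gt_of_ne n2 with l2 | l2 <;>
    rcases lt_or_gt_of_ne n3 with l3 | l3
  · exact log_line_three_points (k := 3 / 2 * β) h0 l1 l3 (by linarith) (by linarith)
  · exact log_line_three_points (k := 3 / 2 * β) h0 l2 l3 (by linarith) (by linarith)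
  · linarith
  · exact log_line_three_points (k := 3 / 2 * β) h2 l2 l1 (by linarith) (by linarith)
  · exact log_line_three_points (k := 3 / 2 * β) h1 l1 l2 (by linarith) (by linarith)
  · linarith
  · exact log_line_three_points (k := 3 / 2 * β) h1 l3 l2 (by linarith) (by linarith)
  · exact log_line_three_points (k := 3 / 2 * β) h2 l3 l1 (by linarith) (by linarith)
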